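/- Let G be a group and let c₁, …, c₉, e₁, f₁, e₂, f₂, x₁, x₂, x₃, x̄₃, δ₁, δ₂, δ₃, t, v, t₁₄, v₁₄ ∈ G. Assume all the hypotheses of the genus-4 computation: the braid relations c₁*c₂*c₁ = c₂*c₁*c₂, c₄*e₁*c₄ = e₁*c₄*e₁, c₄*f₁*c₄ = f₁*c₄*f₁, c₆*e₂*c₆ = e₂*c₆*e₂, c₈*c₉*c₈ = c₉*c₈*c₉; the chain relations (c₄*e₁*c₄*f₁)^3 = δ₁*δ₂ and (c₉*c₈)^6 = δ₃; the lantern relations δ₁*x₁*c₃ = c₁*c₁*e₁*f₁, δ₂*x₂*c₅ = e₁*f₁*e₂*f₂, δ₃*x₃*c₇ = e₂*f₂*c₉*c₉, f₂*t*v = f₁*c₅*c₇*c₉; the identity c₇*x̄₃ = x₃*c₇; that δ₁, δ₂, δ₃ commute with each other and with every other listed element; e₁ commutes with f₁; e₂ commutes with f₂; each of e₁, f₁ commutes with each of e₂, f₂, x₂, c₅; each of e₂, f₂ commutes with x₃, c₇, c₉; f₁, c₅, c₇, c₉ pairwise commute; f₁ commutes with x₂, t, v; t and v each commute with c₅; c₉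 commutes with c₆, x₃, x̄₃; c₁ commutes with each of c₃, c₄, c₅, c₆, c₇, c₈, c₉, e₁, f₁, x₁, x₂, t, v, x̄₃. Assume in addition: the lantern relation f₁*t₁₄*v₁₄ = c₁*c₃*v*c₉; that c₁, c₃, v, c₉ pairwise commute; that c₁ commutes with t₁₄ and v₁₄; that c₃ commutes with e₁, t₁₄, v₁₄; and that c₉ commutes with x₂, t, v. Set ȳ₁ = c₁*c₁*c₂*c₁⁻¹*c₁⁻¹, r₁ = f₁⁻¹*c₄*f₁, u₁ = c₃*r₁*c₃⁻¹, s̄₂ = c₃*c₄*c₃⁻¹, w = v⁻¹*x₂*v, z = v⁻¹*t*v, s₃ = c₇⁻¹*c₆*c₇, r₄ = c₉⁻¹*c₈*c₉. Then (c₁*c₂)^2 * (c₄*e₁*c₄*f₁)⁻¹ * (c₆*e₂*c₆*f₂) * ((c₉*c₈)^2)⁻¹ = ȳ₁*x₁*u₁*e₁*e₁*s̄₂*t₁₄*v₁₄*w*z*s₃*x̄₃*r₄*c₉*c₈*c₈. -/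

import Mathlib

/-- The braid relation moves a factor `a ^ 3` of `(a * b) ^ 4` to the front. -/
theorem braid_pow_four {G : Type*} [Group G] {a b : G} (h : b * a * b = a * b * a) :
    (a * b) ^ 4 = a * a * a * (b * a * a * b * b) := by
  have h' (z : G) : b * (a * (b * z)) = a * (b * (a * z)) := by
    simpa only [mul_assoc] using congrArg (· * z) h
  calc (a * b) ^ 4 = a * (b * (a * (b * (a * (b * (a * b)))))) := by
        simp only [pow_succ, pow_zero, one_mul, mul_assoc]
    _ = a * (a * (b * (a * (a * (b * (a * b)))))) := by rw [h' (a * (b * (a * b)))]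
    _ = a * (a * (b * (a * (b * (a * (b * b)))))) := by rw [← h' b]
    _ = a * (a * (a * (b * (a * (a * (b * b)))))) := by rw [h' (a * (b * b))]
    _ = a * a * a * (b * a * a * b * b) := by simp only [mul_assoc]

/-- The braid relation writes `(a * b) ^ 2` as a conjugate of `b` followed by `a ^ 3`. -/
theorem braid_sq {G : Type*} [Group G] {a b : G} (h : a * b * a = b * a * b) :
    (a * b) ^ 2 = a * a * b * a⁻¹ * a⁻¹ * (a * a * a) := by
  calc (a * b) ^ 2 = a * (b * a * b) := by simp only [pow_two, mul_assoc]
    _ = a * a * b * a⁻¹ * a⁻¹ * (a * a * a) := by rw [← h]; group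

/-- Cancelling `f⁻¹ * e⁻¹` against the square of `c * e * c * f`. -/
theorem inv_mul_inv_mul_sq_of_braid {G : Type*} [Group G] {c e f : G}
    (h : c * e * c = e * c * e) (hef : e * f = f * e) :
    f⁻¹ * e⁻¹ * (c * e * c * f) ^ 2 = f⁻¹ * c * f * e * e * c * e * f := by
  calc f⁻¹ * e⁻¹ * (c * e * c * f) ^ 2
      = f⁻¹ * e⁻¹ * (c * e * c) * f * (c * e * c) * f := by simp only [pow_two, mul_assoc]
    _ = f⁻¹ * c * (e * f) * e * c * e * f := by rw [h]; group
    _ = f⁻¹ * c * f * e * e * c * e * f := by rw [hef]; group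

/-- The first lantern relation absorbs `δ₁⁻¹`, which comes from the chain relation. -/
theorem lantern_mul_chain_inv {G : Type*} [Group G] {c₁ c₃ c₄ e f x δ₁ δ₂ : G}
    (hb : c₄ * e * c₄ = e * c₄ * e) (hef : e * f = f * e)
    (hchain : (c₄ * e * c₄ * f) ^ 3 = δ₁ * δ₂) (hl : δ₁ * x * c₃ = c₁ * c₁ * e * f)
    (hδ : Commute δ₁ δ₂) (hδc : Commute δ₁ c₁) (hδA : Commute δ₂ (c₄ * e * c₄ * f))
    (hce : Commute c₃ e) :
    c₁ * c₁ * (c₄ * e * c₄ * f)⁻¹ =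
      x * (c₃ * (f⁻¹ * c₄ * f) * c₃⁻¹) * e * e * (c₃ * c₄ * c₃⁻¹) * c₃ * (e * f * δ₂⁻¹) := by
  have hl' : c₁ * c₁ * δ₁⁻¹ = x * c₃ * (f⁻¹ * e⁻¹) := by
    have h := (hδc.mul_right hδc).inv_left.eq
    calc c₁ * c₁ * δ₁⁻¹ = δ₁⁻¹ * (c₁ * c₁ * e * f) * (f⁻¹ * e⁻¹) := by rw [← h]; group
      _ = x * c₃ * (f⁻¹ * e⁻¹) := by rw [← hl]; group
  have hA : (c₄ * e * c₄ * f)⁻¹ = δ₁⁻¹ * (c₄ * e * c₄ * f) ^ 2 * δ₂⁻¹ := by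
    have h : δ₁⁻¹ * δ₂⁻¹ = ((c₄ * e * c₄ * f) ^ 3)⁻¹ := by rw [hchain, hδ.eq, mul_inv_rev]
    rw [mul_assoc δ₁⁻¹, ← (hδA.pow_right 2).inv_left.eq, ← mul_assoc, h]
    group
  calc c₁ * c₁ * (c₄ * e * c₄ * f)⁻¹
      = c₁ * c₁ * δ₁⁻¹ * (c₄ * e * c₄ * f) ^ 2 * δ₂⁻¹ := by
        rw [hA]; simp only [mul_assoc]
    _ = x * c₃ * (f⁻¹ * e⁻¹ * (c₄ * e * c₄ * f) ^ 2) * δ₂⁻¹ := by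
        rw [hl']; simp only [mul_assoc]
    _ = x * (c₃ * (f⁻¹ * c₄ * f) * c₃⁻¹) * (c₃ * (e * e)) * c₄ * (e * f * δ₂⁻¹) := by
        rw [inv_mul_inv_mul_sq_of_braid hb hef]; group
    _ = _ := by rw [(hce.mul_right hce).eq]; group

/-- The second and fourth lantern relations absorb `δ₂⁻¹` and `f₂⁻¹`. -/
theorem lantern_mul_middle_chain {G : Type*} [Group G]
    {c₅ c₆ c₇ c₉ e₁ f₁ e₂ f₂ x t v δ : G}
    (hb : c₆ * e₂ * c₆ = e₂ * c₆ * e₂) (hl : δ * x * c₅ = e₁ * f₁ * e₂ * f₂)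
    (hl' : f₂ * t * v = f₁ * c₅ * c₇ * c₉)
    (hδ : Commute δ (e₁ * f₁)) (hfc : Commute f₁ c₅) (hcc : Commute c₅ c₇)
    (hcc' : Commute c₅ c₉) (htc : Commute t c₅) (hvc : Commute v c₅) :
    e₁ * f₁ * δ⁻¹ * (c₆ * e₂ * c₆ * f₂) =
      x * t * v * (c₉⁻¹ * c₇⁻¹ * f₁⁻¹) * c₆ * (e₂ * f₂) := by
  have hδ' : e₁ * f₁ * δ⁻¹ = x * c₅ * (f₂⁻¹ * e₂⁻¹) := by
    calc e₁ * f₁ * δ⁻¹ = δ⁻¹ * (e₁ * f₁ * e₂ * f₂) * (f₂⁻¹ * e₂⁻¹) := by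
          rw [← hδ.inv_left.eq]; group
      _ = x * c₅ * (f₂⁻¹ * e₂⁻¹) := by rw [← hl]; group
  have hf : c₅ * f₂⁻¹ = t * v * (c₉⁻¹ * c₇⁻¹ * f₁⁻¹) := by
    have h : f₂⁻¹ = t * v * (c₅ * (f₁ * c₇ * c₉))⁻¹ := by
      rw [← mul_assoc, ← mul_assoc, ← hfc.eq, ← hl']; group
    have hc : Commute c₅ (t * v * (c₅ * (f₁ * c₇ * c₉))⁻¹) :=
      (htc.mul_left hvc).symm.mul_right
        ((Commute.refl c₅).mul_right ((hfc.symm.mul_right hcc).mul_right hcc')).inv_right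
    rw [h, hc.eq]; group
  calc e₁ * f₁ * δ⁻¹ * (c₆ * e₂ * c₆ * f₂)
      = x * c₅ * f₂⁻¹ * e₂⁻¹ * (c₆ * e₂ * c₆) * f₂ := by
        rw [hδ']; simp only [mul_assoc]
    _ = x * (c₅ * f₂⁻¹) * c₆ * (e₂ * f₂) := by rw [hb]; group
    _ = _ := by rw [hf]; simp only [mul_assoc]

/-- The third lantern relation absorbs `δ⁻¹`, which comes from the second chain relation. -/
theorem lantern_mul_braid_sq_inv {G : Type*} [Group G] {c₇ c₈ c₉ e f x y δ : G}
    (hb : c₈ * c₉ * c₈ = c₉ * c₈ * c₉) (hchain : (c₉ * c₈) ^ 6 = δ)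
    (hl : δ * x * c₇ = e * f * c₉ * c₉) (hy : c₇ * y = x * c₇) (hδ : Commute δ (e * f)) :
    e * f * ((c₉ * c₈) ^ 2)⁻¹ = c₇ * y * (c₉ * c₈ * c₉ * c₉ * c₈ * c₈) := by
  have hinv : ((c₉ * c₈) ^ 2)⁻¹ = δ⁻¹ * (c₉ * c₈) ^ 4 := by rw [← hchain]; group
  calc e * f * ((c₉ * c₈) ^ 2)⁻¹ = e * f * δ⁻¹ * (c₉ * c₈) ^ 4 := by
        rw [hinv]; simp only [mul_assoc]
    _ = δ⁻¹ * (e * f * c₉ * c₉) * (c₉⁻¹ * c₉⁻¹) * (c₉ * c₈) ^ 4 := by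
        rw [← hδ.inv_left.eq]; simp only [mul_assoc, mul_inv_cancel_left]
    _ = x * c₇ * (c₉ * c₈ * c₉ * c₉ * c₈ * c₈) := by
        rw [← hl, braid_pow_four hb]; group
    _ = _ := by rw [hy]

theorem genus_four_alternate {G : Type*} [Group G]
    (c₁ c₂ c₃ c₄ c₅ c₆ c₇ c₈ c₉ e₁ f₁ e₂ f₂ x₁ x₂ x₃ xb₃ δ₁ δ₂ δ₃ t v t₁₄ v₁₄ : G)
    (hb₁ : c₁ * c₂ * c₁ = c₂ * c₁ * c₂)
    (hb₂ : c₄ * e₁ * c₄ = e₁ * c₄ * e₁)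
    (hb₃ : c₄ * f₁ * c₄ = f₁ * c₄ * f₁)
    (hb₄ : c₆ * e₂ * c₆ = e₂ * c₆ * e₂)
    (hb₅ : c₈ * c₉ * c₈ = c₉ * c₈ * c₉)
    (hchain₁ : (c₄ * e₁ * c₄ * f₁) ^ 3 = δ₁ * δ₂)
    (hchain₂ : (c₉ * c₈) ^ 6 = δ₃)
    (hlantern₁ : δ₁ * x₁ * c₃ = c₁ * c₁ * e₁ * f₁)
    (hlantern₂ : δ₂ * x₂ * c₅ = e₁ * f₁ * e₂ * f₂)
    (hlantern₃ : δ₃ * x₃ * c₇ = e₂ * f₂ * c₉ * c₉)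
    (hlantern₄ : f₂ * t * v = f₁ * c₅ * c₇ * c₉)
    (hx₃ : c₇ * xb₃ = x₃ * c₇)
    (hδ : ∀ a ∈ [δ₁, δ₂, δ₃],
      ∀ b ∈ [δ₁, δ₂, δ₃, c₁, c₂, c₃, c₄, c₅, c₆, c₇, c₈, c₉, e₁, f₁, e₂, f₂,
        x₁, x₂, x₃, xb₃, t, v, t₁₄, v₁₄], a * b = b * a)
    (hef₁ : e₁ * f₁ = f₁ * e₁)
    (hef₂ : e₂ * f₂ = f₂ * e₂)
    (h₁₂ : ∀ a ∈ [e₁, f₁], ∀ b ∈ [e₂, f₂, x₂, c₅], a * b = b * a)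
    (h₂₃ : ∀ a ∈ [e₂, f₂], ∀ b ∈ [x₃, c₇, c₉], a * b = b * a)
    (hpair : List.Pairwise (fun a b => a * b = b * a) [f₁, c₅, c₇, c₉])
    (hf₁ : ∀ b ∈ [x₂, t, v], f₁ * b = b * f₁)
    (htv : ∀ a ∈ [t, v], a * c₅ = c₅ * a)
    (hc₉ : ∀ b ∈ [c₆, x₃, xb₃], c₉ * b = b * c₉)
    (hc₁ : ∀ b ∈ [c₃, c₄, c₅, c₆, c₇, c₈, c₉, e₁, f₁, x₁, x₂, t, v, xb₃],
      c₁ * b = b * c₁)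
    (hlantern₅ : f₁ * t₁₄ * v₁₄ = c₁ * c₃ * v * c₉)
    (hpair' : List.Pairwise (fun a b => a * b = b * a) [c₁, c₃, v, c₉])
    (hc₁' : ∀ b ∈ [t₁₄, v₁₄], c₁ * b = b * c₁)
    (hc₃ : ∀ b ∈ [e₁, t₁₄, v₁₄], c₃ * b = b * c₃)
    (hc₉' : ∀ b ∈ [x₂, t, v], c₉ * b = b * c₉) :
    (c₁ * c₂) ^ 2 * (c₄ * e₁ * c₄ * f₁)⁻¹ * (c₆ * e₂ * c₆ * f₂) * ((c₉ * c₈) ^ 2)⁻¹ =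
      (c₁ * c₁ * c₂ * c₁⁻¹ * c₁⁻¹) * x₁ * (c₃ * (f₁⁻¹ * c₄ * f₁) * c₃⁻¹) * e₁ * e₁ *
        (c₃ * c₄ * c₃⁻¹) * t₁₄ * v₁₄ * (v⁻¹ * x₂ * v) * (v⁻¹ * t * v) *
        (c₇⁻¹ * c₆ * c₇) * xb₃ * (c₉⁻¹ * c₈ * c₉) * c₉ * c₈ * c₈ := by
  have hδc : Commute δ₁ c₁ := hδ δ₁ (by simp) c₁ (by simp)
  have hδδ : Commute δ₁ δ₂ := hδ δ₁ (by simp) δ₂ (by simp)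
  have hδc₄ : Commute δ₂ c₄ := hδ δ₂ (by simp) c₄ (by simp)
  have hδe : Commute δ₂ e₁ := hδ δ₂ (by simp) e₁ (by simp)
  have hδf : Commute δ₂ f₁ := hδ δ₂ (by simp) f₁ (by simp)
  have hδe₂ : Commute δ₃ e₂ := hδ δ₃ (by simp) e₂ (by simp)
  have hδf₂ : Commute δ₃ f₂ := hδ δ₃ (by simp) f₂ (by simp)
  have hce : Commute c₃ e₁ := hc₃ e₁ (by simp)
  have htc : Commute t c₅ := htv t (by simp)
  have hvc : Commute v c₅ := htv v (by simp)
  have hfx : Commute f₁ x₂ := hf₁ x₂ (by simp)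
  have hft : Commute f₁ t := hf₁ t (by simp)
  have hfv : Commute f₁ v := hf₁ v (by simp)
  have h₁₃ : Commute c₁ c₃ := hc₁ c₃ (by simp)
  have h₁₄ : Commute c₁ c₄ := hc₁ c₄ (by simp)
  have h₁e : Commute c₁ e₁ := hc₁ e₁ (by simp)
  have h₁f : Commute c₁ f₁ := hc₁ f₁ (by simp)
  have h₁x : Commute c₁ x₁ := hc₁ x₁ (by simp)
  have h₃t : Commute c₃ t₁₄ := hc₃ t₁₄ (by simp)
  have h₃v : Commute c₃ v₁₄ := hc₃ v₁₄ (by simp)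
  have h₉₆ : Commute c₉ c₆ := hc₉ c₆ (by simp)
  have h₉xb : Commute c₉ xb₃ := hc₉ xb₃ (by simp)
  have h₉x : Commute c₉ x₂ := hc₉' x₂ (by simp)
  have h₉t : Commute c₉ t := hc₉' t (by simp)
  have h₉v : Commute c₉ v := hc₉' v (by simp)
  simp only [List.pairwise_cons, List.forall_mem_cons] at hpair hpair'
  obtain ⟨-, ⟨h₃v', h₃₉, -⟩, -⟩ := hpair'
  obtain ⟨⟨hf₅, hf₇, hf₉, -⟩, ⟨h₅₇, h₅₉, -⟩, ⟨h₇₉, -⟩, -⟩ := hpair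
  -- The fifth lantern relation forces `c₃` to commute with `f₁`.
  have h₃f : Commute c₃ f₁ := by
    have hf : f₁ = c₁ * c₃ * v * c₉ * (t₁₄ * v₁₄)⁻¹ := by rw [← hlantern₅]; group
    rw [hf]
    exact (((h₁₃.symm.mul_right (Commute.refl c₃)).mul_right h₃v').mul_right h₃₉).mul_right
      (h₃t.mul_right h₃v).inv_right
  have htv₁₄ : t₁₄ * v₁₄ = c₁ * c₃ * f₁⁻¹ * v * c₉ := by
    have h : t₁₄ * v₁₄ = f₁⁻¹ * (c₁ * c₃) * v * c₉ := by
      calc t₁₄ * v₁₄ = f₁⁻¹ * (f₁ * t₁₄ * v₁₄) := by group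
        _ = f₁⁻¹ * (c₁ * c₃) * v * c₉ := by rw [hlantern₅]; simp only [mul_assoc]
    rw [h, ((h₁f.mul_left h₃f).symm.inv_left).eq]
  have hu : Commute c₁ (x₁ * (c₃ * (f₁⁻¹ * c₄ * f₁) * c₃⁻¹) * e₁ * e₁ * (c₃ * c₄ * c₃⁻¹)) :=
    (((h₁x.mul_right ((h₁₃.mul_right ((h₁f.inv_right.mul_right h₁₄).mul_right h₁f)).mul_right
      h₁₃.inv_right)).mul_right h₁e).mul_right h₁e).mul_right
      ((h₁₃.mul_right h₁₄).mul_right h₁₃.inv_right)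
  have hf : Commute f₁⁻¹ (x₂ * t * v) := ((hfx.mul_right hft).mul_right hfv).inv_left
  have h₉₇ : Commute c₉ c₇ := Commute.symm h₇₉
  have hw : Commute c₉ (x₂ * t * v * (c₇⁻¹ * c₆ * c₇) * xb₃) :=
    ((((h₉x.mul_right h₉t).mul_right h₉v).mul_right
      ((h₉₇.inv_right.mul_right h₉₆).mul_right h₉₇)).mul_right h₉xb)
  have hs : Commute c₉⁻¹ (c₇⁻¹ * c₆ * c₇ * xb₃) :=
    (((h₉₇.inv_right.mul_right h₉₆).mul_right h₉₇).mul_right h₉xb).inv_left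
  have hfc : c₉⁻¹ * c₇⁻¹ * f₁⁻¹ = f₁⁻¹ * c₉⁻¹ * c₇⁻¹ := by
    have h : Commute f₁ (c₉⁻¹ * c₇⁻¹) :=
      (Commute.inv_right hf₉).mul_right (Commute.inv_right hf₇)
    rw [mul_assoc f₁⁻¹, h.inv_left.eq]
  have hleft := lantern_mul_chain_inv hb₂ hef₁ hchain₁ hlantern₁ hδδ hδc
    (((hδc₄.mul_right hδe).mul_right hδc₄).mul_right hδf) hce
  have hmiddle := lantern_mul_middle_chain hb₄ hlantern₂ hlantern₄ (hδe.mul_right hδf)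
    hf₅ h₅₇ h₅₉ htc hvc
  have hright := lantern_mul_braid_sq_inv hb₅ hchain₂ hlantern₃ hx₃ (hδe₂.mul_right hδf₂)
  -- `y` and `u` name the parts of the word that both sides share.
  set y := c₁ * c₁ * c₂ * c₁⁻¹ * c₁⁻¹
  set u := x₁ * (c₃ * (f₁⁻¹ * c₄ * f₁) * c₃⁻¹) * e₁ * e₁ * (c₃ * c₄ * c₃⁻¹)
  calc (c₁ * c₂) ^ 2 * (c₄ * e₁ * c₄ * f₁)⁻¹ * (c₆ * e₂ * c₆ * f₂) * ((c₉ * c₈) ^ 2)⁻¹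
      = y * c₁ * (c₁ * c₁ * (c₄ * e₁ * c₄ * f₁)⁻¹) * (c₆ * e₂ * c₆ * f₂) *
          ((c₉ * c₈) ^ 2)⁻¹ := by
        rw [braid_sq hb₁]; simp only [y, mul_assoc]
    _ = y * (c₁ * u) * c₃ * (e₁ * f₁ * δ₂⁻¹ * (c₆ * e₂ * c₆ * f₂)) * ((c₉ * c₈) ^ 2)⁻¹ := by
        rw [hleft]; simp only [mul_assoc]
    _ = y * u * c₁ * c₃ * (x₂ * t * v) * (c₉⁻¹ * c₇⁻¹ * f₁⁻¹) * c₆ *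
          (e₂ * f₂ * ((c₉ * c₈) ^ 2)⁻¹) := by
        rw [hu.eq, hmiddle]; simp only [mul_assoc]
    _ = y * u * c₁ * c₃ * (x₂ * t * v * f₁⁻¹) * (c₉⁻¹ * (c₇⁻¹ * c₆ * c₇ * xb₃)) * c₉ *
          (c₈ * c₉ * c₉ * c₈ * c₈) := by
        rw [hright, hfc]; simp only [mul_assoc]
    _ = y * u * c₁ * c₃ * f₁⁻¹ * (x₂ * t * v * (c₇⁻¹ * c₆ * c₇) * xb₃ * c₉) *
          (c₉⁻¹ * c₈ * c₉ * c₉ * c₈ * c₈) := by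
        rw [← hf.eq, hs.eq]; group
    _ = y * u * (c₁ * c₃ * f₁⁻¹ * (c₉ * v)) * (v⁻¹ * x₂ * v) * (v⁻¹ * t * v) *
          (c₇⁻¹ * c₆ * c₇) * xb₃ * (c₉⁻¹ * c₈ * c₉) * c₉ * c₈ * c₈ := by
        rw [← hw.eq]; group
    _ = y * u * (t₁₄ * v₁₄) * (v⁻¹ * x₂ * v) * (v⁻¹ * t * v) *
          (c₇⁻¹ * c₆ * c₇) * xb₃ * (c₉⁻¹ * c₈ * c₉) * c₉ * c₈ * c₈ := by
        rw [htv₁₄, h₉v.eq]; simp only [mul_assoc]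
    _ = _ := by simp only [u, mul_assoc]
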